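/- Let X be an involutive BE algebra satisfying property (QW1): x→(x∧y) = x→y for all x, y ∈ X. Then (x∧y)∧(z∧x) = y∧(z∧x) holds for all x, y, z ∈ X. -/

import Mathlib

/-!
Write `w = z ∧ x`. By contraposition, `u ∧ w` depends on `u` only through `w → u`, so it suffices that
`w → (x ∧ y) = w → y`. Since `w = (c → x*)*` with `c = z* → x*`, contraposition and exchange give the
residuation identity `w → u = c → (x → u)` for every `u`, and (QW1) replaces `x → (x ∧ y)` by `x → y`.
-/

/-- A bounded involutive BE algebra. -/
class InvBE (X : Type*) where
  imp : X → X → X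
  one : X
  zero : X
  be1 : ∀ x : X, imp x x = one
  be2 : ∀ x : X, imp x one = one
  be3 : ∀ x : X, imp one x = x
  be4 : ∀ x y z : X, imp x (imp y z) = imp y (imp x z)
  bound : ∀ x : X, imp zero x = one
  dn : ∀ x : X, imp (imp x zero) zero = x

namespace InvBE

variable {X : Type*} [InvBE X]

/-- Negation: `x* = x → 0`. -/
def neg (x : X) : X := imp x zero

/-- `x ∨ y = (x → y) → y`. -/
def sup (x y : X) : X := imp (imp x y) y

/-- `x ∧ y = ((x* → y*) → y*)*`. -/
def inf (x y : X) : X := neg (imp (imp (neg x) (neg y)) (neg y))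

/-- `x ≤ y` iff `x → y = 1`. -/
def le (x y : X) : Prop := imp x y = one

/-- `x ≤_Q y` iff `x = x ∧ y`. -/
def leQ (x y : X) : Prop := x = inf x y

end InvBE

namespace InvBE

variable {X : Type*} [InvBE X]

theorem imp_neg_neg (x y : X) : imp (neg x) (neg y) = imp y x := by
  unfold neg
  rw [be4, dn]

/-- Residuation: `(c → x*)*` is the product of `c` and `x`. -/
theorem neg_imp_neg_imp (c x u : X) :
    imp (neg (imp c (neg x))) u = imp c (imp x u) := by
  rw [← imp_neg_neg u (neg _), ← imp_neg_neg u x]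
  have h : neg (neg (imp c (neg x))) = imp c (neg x) := dn _
  rw [h, be4]

end InvBE

open InvBE in
theorem stmt_3 {X : Type*} [InvBE X]
    (qw1 : ∀ x y : X, imp x (inf x y) = imp x y) :
    ∀ x y z : X, inf (inf x y) (inf z x) = inf y (inf z x) := by
  intro x y z
  have key : imp (inf z x) (inf x y) = imp (inf z x) y := by
    rw [show inf z x = neg (imp (imp (neg z) (neg x)) (neg x)) from rfl,
      neg_imp_neg_imp, neg_imp_neg_imp, qw1]
  have h (u w : X) : inf u w = neg (imp (imp w u) (neg w)) := by
    rw [← imp_neg_neg u w]; rfl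
  rw [h (inf x y), h y, key]
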